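/- Let G be a finitely generated group with Cayley graph Γ, admitting a minimal, non-elliptic action without inversions on a simplicial tree T, with every edge stabiliser finitely generated, undistorted in G, and satisfying (∂_M E, G) = ∅. Fix subgraphs Γ(𝔢) ⊆ Γ as in the setup, and for a halfspace 𝔥 let M(𝔥) := {[γ] ∈ ∂_M G : some sub-ray of γ is entirely contained in Γ(𝔥)}. Then for every halfspace 𝔥, the Morse boundary decomposes as a partition ∂_M G = M(𝔥) ⊔ M(𝔥*) into two closed subsets. -/

import Mathlib

/-!
The partition rests on one uniform statement (`exists_uniform_bound`): if `E ≤ G` is undistorted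
with empty relative Morse boundary, then for every gauge `N` and radius `R` there is `M` such that
no `N`-Morse geodesic ray from `1` meets the `R`-neighbourhood of `E` after time `M`.

Suppose `N`-Morse rays `γ_i` come `R`-close to points `h_i ∈ E` at times `m_i → ∞`. Geodesics of
`E` from `1` to `h_i` are uniform quasi-geodesics of `G`, so they fellow-travel `γ_i` on `[0, m_i]`
with constants independent of `i` (`fellow_travel`). They have a limit `σ` along an ultrafilter,
a geodesic ray of `E`. A quasi-geodesic of `G` with endpoints on `σ` has endpoints near `γ_i` for
suitable large `i`, so it stays near `γ_i` and hence near `σ`; thus `σ` is Morse in `G`, and by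
undistortion also in `E` (`isMorse_of_undistorted`). This contradicts `(∂_M E, G) = ∅`.

Since `Γ(𝔢)` lies in a bounded neighbourhood of the edge stabiliser, `N`-Morse rays avoid it after
a time `M(N)`, and afterwards cannot change sides because edges of the Cayley graph joining the two
sides lie in `Γ(𝔢)`. Hence every ray ends on one side. Rays at finite Hausdorff distance end on the
same side, since otherwise a tail would lie near both sides, hence near `Γ(𝔢)`. Finally, in the
`N`-Morse stratum the side is read off from the vertex at time `M(N) + 1`, a locally constant
function of the ray, so both pieces are closed.
-/

open Set Filter Topology
open scoped ENNReal

namespace MorseGoG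

/-! ## Metric notions relative to an explicit distance function

Throughout, distances are given by an explicit function `d : X → X → ℝ`, so that the same
notions apply to metric spaces (`d = dist`), to groups with word metrics, and to subgroups
with their own word metrics. -/

variable {X : Type*}

/-- `γ` is a `C`-quasi-geodesic on the parameter set `I ⊆ ℝ` with respect to `d`:
`C ≥ 1` and `|s−t|/C − C ≤ d (γ s) (γ t) ≤ C|s−t| + C` for all `s, t ∈ I`. -/
def IsQG (d : X → X → ℝ) (C : ℝ) (I : Set ℝ) (γ : ℝ → X) : Prop :=
  1 ≤ C ∧ ∀ s ∈ I, ∀ t ∈ I,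
    |s - t| / C - C ≤ d (γ s) (γ t) ∧ d (γ s) (γ t) ≤ C * |s - t| + C

/-- `x` lies in the (closed) `r`-neighbourhood of `A` with respect to `d`. -/
def InNbhd (d : X → X → ℝ) (A : Set X) (r : ℝ) (x : X) : Prop :=
  ∃ a ∈ A, d x a ≤ r

/-- The set `A` (e.g. the image of a quasi-geodesic) is `N`-Morse with respect to `d`:
every `C`-quasi-geodesic segment with endpoints on `A` is contained in the
`N C`-neighbourhood of `A`. -/
def MorseSet (d : X → X → ℝ) (N : ℝ → ℝ) (A : Set X) : Prop :=
  ∀ C : ℝ, 1 ≤ C → ∀ a b : ℝ, a ≤ b → ∀ α : ℝ → X,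
    IsQG d C (Set.Icc a b) α → α a ∈ A → α b ∈ A →
    ∀ t ∈ Set.Icc a b, InNbhd d A (N C) (α t)

/-- `A` is Morse: it is `N`-Morse for some Morse gauge `N`. -/
def IsMorse (d : X → X → ℝ) (A : Set X) : Prop := ∃ N : ℝ → ℝ, MorseSet d N A

/-- A discrete geodesic ray: the sequence of vertices of a geodesic ray in a graph. -/
def IsGeodSeq (d : X → X → ℝ) (γ : ℕ → X) : Prop :=
  ∀ m n : ℕ, d (γ m) (γ n) = |(m : ℝ) - (n : ℝ)|

/-- A discrete geodesic segment of length `n`. -/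
def IsGeodSeg (d : X → X → ℝ) (n : ℕ) (γ : ℕ → X) : Prop :=
  ∀ i ≤ n, ∀ j ≤ n, d (γ i) (γ j) = |(i : ℝ) - (j : ℝ)|

/-- A discrete `C`-quasi-geodesic ray. -/
def IsQGSeq (d : X → X → ℝ) (C : ℝ) (γ : ℕ → X) : Prop :=
  1 ≤ C ∧ ∀ m n : ℕ,
    |(m : ℝ) - n| / C - C ≤ d (γ m) (γ n) ∧ d (γ m) (γ n) ≤ C * |(m : ℝ) - n| + C

/-- Two sets are at finite Hausdorff distance with respect to `d`. -/
def BddHD (d : X → X → ℝ) (A B : Set X) : Prop :=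
  ∃ r : ℝ, (∀ a ∈ A, InNbhd d B r a) ∧ (∀ b ∈ B, InNbhd d A r b)

/-- A discrete edge path with `n` steps: consecutive points are at distance at most `1`
(i.e. equal or joined by an edge, in a graph whose vertex set carries the metric `d`). -/
def IsEdgePath (d : X → X → ℝ) (n : ℕ) (c : ℕ → X) : Prop :=
  ∀ i < n, d (c i) (c (i + 1)) ≤ 1

/-- Combinatorial divergence of a discrete ray `γ` in a graph with vertex distance `d`:
the infimum, over `s ≥ r` and over edge paths joining `γ (s - r)` to `γ (s + r)` and
avoiding the ball of radius `ε·r` around `γ s`, of the length of the path. -/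
noncomputable def gdivergence (d : X → X → ℝ) (γ : ℕ → X) (r : ℕ) (ε : ℝ) : ℝ≥0∞ :=
  ⨅ (s : ℕ) (_ : r ≤ s) (n : ℕ) (c : ℕ → X) (_ : IsEdgePath d n c)
    (_ : c 0 = γ (s - r)) (_ : c n = γ (s + r))
    (_ : ∀ i ≤ n, ε * r < d (c i) (γ s)), (n : ℝ≥0∞)

/-! ## Geodesic metric spaces, geodesic rays, divergence -/

variable {Y : Type*} [MetricSpace Y]

/-- A geodesic metric space: any two points are joined by an isometrically parametrised path. -/
def IsGeodesicSpace (Y : Type*) [MetricSpace Y] : Prop :=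
  ∀ x y : Y, ∃ γ : ℝ → Y, γ 0 = x ∧ γ (dist x y) = y ∧
    ∀ s ∈ Set.Icc 0 (dist x y), ∀ t ∈ Set.Icc 0 (dist x y), dist (γ s) (γ t) = |s - t|

/-- A geodesic ray (defined on `[0,∞)` and extended constantly to negative times). -/
def IsGeodRay (γ : ℝ → Y) : Prop :=
  (∀ s t : ℝ, 0 ≤ s → 0 ≤ t → dist (γ s) (γ t) = |s - t|) ∧ ∀ t : ℝ, γ t = γ (max t 0)

theorem IsGeodRay.lipschitz {γ : ℝ → Y} (h : IsGeodRay γ) : LipschitzWith 1 γ := by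
  apply LipschitzWith.of_dist_le_mul
  intro s t
  rw [h.2 s, h.2 t, h.1 _ _ (le_max_right s 0) (le_max_right t 0)]
  rw [NNReal.coe_one, one_mul, Real.dist_eq]
  exact abs_max_sub_max_le_abs s t 0

/-- Divergence function `δ_γ(r, ε)` of a quasi-geodesic ray `γ` in a metric space:
the infimum of lengths (total variations) of paths connecting `γ (s - r)` to `γ (s + r)`
outside the closed ball `B(γ s, εr)`, over all `s ≥ r`. -/
noncomputable def divergence (γ : ℝ → Y) (r ε : ℝ) : ℝ≥0∞ :=
  ⨅ (s : ℝ) (_ : r ≤ s) (c : ℝ → Y) (_ : ContinuousOn c (Set.Icc 0 1))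
    (_ : c 0 = γ (s - r)) (_ : c 1 = γ (s + r))
    (_ : ∀ t ∈ Set.Icc (0 : ℝ) 1, ε * r < dist (c t) (γ s)),
    eVariationOn c (Set.Icc 0 1)

/-- Quasi-isometric embedding between sets carrying explicit distance functions. -/
def IsQIEmb {Z W : Type*} (dZ : Z → Z → ℝ) (dW : W → W → ℝ) (f : Z → W) : Prop :=
  ∃ C : ℝ, 1 ≤ C ∧ ∀ z z' : Z,
    dZ z z' / C - C ≤ dW (f z) (f z') ∧ dW (f z) (f z') ≤ C * dZ z z' + C

/-! ## The Morse boundary of a proper geodesic metric space -/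

/-- A Morse geodesic ray based at `p` in the metric space `Y`. -/
structure MRay (Y : Type*) [MetricSpace Y] (p : Y) where
  ray : ℝ → Y
  base : ray 0 = p
  geod : IsGeodRay ray
  morse : IsMorse dist (Set.range ray)

/-- Two rays are identified when they are at finite Hausdorff distance. -/
def mrayRel (p : Y) (x y : MRay Y p) : Prop :=
  BddHD dist (Set.range x.ray) (Set.range y.ray)

/-- The Morse boundary of a metric space, as a set: Morse geodesic rays based at `p`,
modulo finite Hausdorff distance. -/
def MorseBoundarySp (Y : Type*) [MetricSpace Y] (p : Y) : Type _ := Quot (mrayRel p)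

/-- The `N`-Morse stratum: `N`-Morse geodesic rays based at `p`. -/
def NRaysSp (Y : Type*) [MetricSpace Y] (p : Y) (N : ℝ → ℝ) : Type _ :=
  {γ : MRay Y p // MorseSet dist N (Set.range γ.ray)}

/-- Each stratum of rays carries the compact-open topology (as a set of continuous maps). -/
noncomputable instance NRaysSp.instTop (p : Y) (N : ℝ → ℝ) : TopologicalSpace (NRaysSp Y p N) :=
  TopologicalSpace.induced
    (fun γ => (⟨γ.1.ray, γ.1.geod.lipschitz.continuous⟩ : C(ℝ, Y))) inferInstance

/-- The Morse boundary carries the direct limit topology over all Morse gauges: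
a set is open iff its intersection with each stratum `∂_M^N Y_p` is open there. -/
noncomputable instance MorseBoundarySp.instTop (p : Y) :
    TopologicalSpace (MorseBoundarySp Y p) :=
  ⨆ N : ℝ → ℝ,
    TopologicalSpace.coinduced (fun γ : NRaysSp Y p N => Quot.mk (mrayRel p) γ.1) inferInstance

/-- The relative Morse boundary `(∂_M Y, f)` of a quasi-isometric embedding `f : Y → X`:
classes of Morse rays of `Y` whose image under `f` is Morse in `X`.  It is a subset of
`∂_M Y` (and carries the subspace topology). -/
def relBoundarySp {Y X : Type*} [MetricSpace Y] [MetricSpace X] (p : Y) (f : Y → X) :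
    Set (MorseBoundarySp Y p) :=
  {ξ | ∃ γ : MRay Y p, Quot.mk (mrayRel p) γ = ξ ∧ IsMorse dist (f '' Set.range γ.ray)}

/-! ## Word metrics and Morse boundaries of finitely generated groups -/

variable {G : Type*} [Group G]

/-- Word length of `g` with respect to the (symmetrised) alphabet `S`. -/
noncomputable def wordLength (S : Set G) (g : G) : ℕ :=
  sInf {n : ℕ | ∃ l : List G, l.length = n ∧ (∀ x ∈ l, x ∈ S ∨ x⁻¹ ∈ S) ∧ l.prod = g}

/-- Word metric on `G` with respect to `S`; this is the distance between vertices in the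
Cayley graph `Cay(G, S)`. -/
noncomputable def wdist (S : Set G) (g h : G) : ℝ := wordLength S (g⁻¹ * h)

/-- A Morse geodesic ray in the Cayley graph of `(G, S)`, based at the identity,
recorded by its sequence of vertices. -/
structure GRay (G : Type*) [Group G] (S : Set G) where
  seq : ℕ → G
  base : seq 0 = 1
  geod : IsGeodSeq (wdist S) seq
  morse : IsMorse (wdist S) (Set.range seq)

/-- Identification of rays at finite Hausdorff distance. -/
def grayRel (S : Set G) (x y : GRay G S) : Prop :=
  BddHD (wdist S) (Set.range x.seq) (Set.range y.seq)

/-- The Morse boundary `∂_M G` of the group `G` with finite generating set `S`. -/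
def MorseBoundary (G : Type*) [Group G] (S : Set G) : Type _ := Quot (grayRel (G := G) S)

/-- The stratum of `N`-Morse rays. -/
def NGRays (G : Type*) [Group G] (S : Set G) (N : ℝ → ℝ) : Type _ :=
  {γ : GRay G S // MorseSet (wdist S) N (Set.range γ.seq)}

/-- The compact-open topology on a stratum: for rays in a graph (vertex sequences) this is
the topology of pointwise convergence of the vertex sequences, `G` being discrete. -/
noncomputable instance NGRays.instTop (S : Set G) (N : ℝ → ℝ) :
    TopologicalSpace (NGRays G S N) :=
  TopologicalSpace.induced (fun γ => γ.1.seq)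
    (@Pi.topologicalSpace ℕ (fun _ => G) (fun _ => ⊥))

/-- The direct limit topology on the Morse boundary of a group. -/
noncomputable instance MorseBoundary.instTop (S : Set G) :
    TopologicalSpace (MorseBoundary G S) :=
  ⨆ N : ℝ → ℝ,
    TopologicalSpace.coinduced (fun γ : NGRays G S N => Quot.mk (grayRel S) γ.1) inferInstance

/-! ## Subgroups: undistortion, relative Morse boundaries -/

/-- `H` is finitely generated and undistorted in `(G, S)`: it has a finite generating set
whose word metric is bi-Lipschitz equivalent (suitably, quasi-isometric) to the metric
induced from `G`. -/
def FGUndistorted (S : Set G) (H : Subgroup G) : Prop :=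
  ∃ T : Finset H, Subgroup.closure (T : Set H) = ⊤ ∧
    ∃ C : ℝ, 1 ≤ C ∧ ∀ h h' : H,
      wdist (T : Set H) h h' ≤ C * wdist S (h : G) (h' : G) + C ∧
      wdist S (h : G) (h' : G) ≤ C * wdist (T : Set H) h h' + C

/-- The relative Morse boundary of `H` in `G` is empty, `(∂_M H, G) = ∅`:
no Morse geodesic ray of `H` (w.r.t. any finite generating set of `H`) remains Morse in `G`. -/
def RelMorseEmpty (S : Set G) (H : Subgroup G) : Prop :=
  ∀ T : Finset H, Subgroup.closure (T : Set H) = ⊤ →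
    ∀ γ : ℕ → H, IsGeodSeq (wdist (T : Set H)) γ →
      IsMorse (wdist (T : Set H)) (Set.range γ) →
      ¬ IsMorse (wdist S) (Set.range fun n => (γ n : G))

/-- The image of the natural injection `(∂_M H, G) ↪ ∂_M G`: those classes in `∂_M G`
having a representative ray staying at bounded distance from `H`. -/
def relBdryImage (S : Set G) (H : Subgroup G) : Set (MorseBoundary G S) :=
  {ξ | ∃ γ : GRay G S, Quot.mk (grayRel S) γ = ξ ∧
        ∃ r : ℝ, ∀ n : ℕ, ∃ h ∈ H, wdist S (γ.seq n) h ≤ r}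

/-- The relative Morse boundary `(∂_M H, G)` as a subset of `∂_M H` (where `∂_M H` is
formed w.r.t. a generating set `T` of `H`): classes of rays that remain Morse in `G`. -/
def relBdryIn (S : Set G) (H : Subgroup G) (T : Set H) : Set (MorseBoundary H T) :=
  {ξ | ∃ γ : GRay H T, Quot.mk (grayRel T) γ = ξ ∧
        IsMorse (wdist S) (Set.range fun n => (γ.seq n : G))}

/-- Specification of the natural map `∂_M H → ∂_M G` (or of its restriction to the relative
boundary): each class is sent to the class of a ray of `G` at finite Hausdorff distance
from the image of (a representative of) the given class. -/
def InclSpec (S : Set G) (H : Subgroup G) (TH : Set H)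
    (F : MorseBoundary H TH → MorseBoundary G S) : Prop :=
  ∀ γ : GRay H TH, ∀ β : GRay G S,
    Quot.mk (grayRel S) β = F (Quot.mk (grayRel TH) γ) →
    BddHD (wdist S) (Set.range fun n => ((γ.seq n : G))) (Set.range β.seq)

/-! ## Asymptotic cones and relatively wide subgroups -/

/-- Admissible sequences for an asymptotic cone: sequences at bounded rescaled distance
from the basepoints `o`. -/
def conePts (ω : Ultrafilter ℕ) (d : X → X → ℝ) (o : ℕ → X) (s : ℕ → ℝ) : Set (ℕ → X) :=
  {x | ∃ B : ℝ, ∀ᶠ n in (ω : Filter ℕ), d (o n) (x n) ≤ B * s n}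

/-- The pseudo-distance of the asymptotic cone: ultralimit of the rescaled distances. -/
noncomputable def coneDist (ω : Ultrafilter ℕ) (d : X → X → ℝ) (s : ℕ → ℝ)
    (x y : ℕ → X) : ℝ :=
  limUnder (ω : Filter ℕ) (fun n => d (x n) (y n) / s n)

/-- The topology of the asymptotic cone, as a topology on representative sequences:
generated by the open balls of the cone pseudo-distance. -/
noncomputable def coneTop (ω : Ultrafilter ℕ) (d : X → X → ℝ) (o : ℕ → X) (s : ℕ → ℝ) :
    TopologicalSpace (ℕ → X) :=
  TopologicalSpace.generateFrom
    {U | ∃ c ∈ conePts ω d o s, ∃ ε : ℝ, 0 < ε ∧ U = {x | coneDist ω d s c x < ε}}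

/-- `z` is a cut point of the asymptotic cone separating the points `x` and `y`:
`x, y` differ from `z` and do not lie in a common connected subset of the complement
of (the point represented by) `z`. -/
def ConeSeparates (ω : Ultrafilter ℕ) (d : X → X → ℝ) (o : ℕ → X) (s : ℕ → ℝ)
    (x y z : ℕ → X) : Prop :=
  coneDist ω d s x z ≠ 0 ∧ coneDist ω d s y z ≠ 0 ∧
  ¬ ∃ A : Set (ℕ → X),
      A ⊆ {w ∈ conePts ω d o s | coneDist ω d s w z ≠ 0} ∧ x ∈ A ∧ y ∈ A ∧
      @IsPreconnected (ℕ → X) (coneTop ω d o s) A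

/-- `H` is relatively wide in `(G, S)`: in every asymptotic cone of `G` (over a
non-principal ultrafilter, arbitrary basepoints and scaling factors tending to infinity),
no two limit points of `H` are separated by a cut point. -/
def RelativelyWide (S : Set G) (H : Subgroup G) : Prop :=
  ∀ ω : Ultrafilter ℕ, (ω : Filter ℕ) ≤ Filter.cofinite →
  ∀ (o : ℕ → G) (s : ℕ → ℝ), (∀ n, 0 < s n) → Tendsto s atTop atTop →
  ∀ x y z : ℕ → G, (∀ n, x n ∈ H) → (∀ n, y n ∈ H) →
    x ∈ conePts ω (wdist S) o s → y ∈ conePts ω (wdist S) o s →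
    z ∈ conePts ω (wdist S) o s →
    ¬ ConeSeparates ω (wdist S) o s x y z

/-- The subgroup `H ≤ V` is relatively wide in `V` (for any, equivalently some, finite
generating set of `V`). -/
def RelWideIn (V H : Subgroup G) : Prop :=
  ∀ SV : Finset V, Subgroup.closure (SV : Set V) = ⊤ →
    RelativelyWide (SV : Set V) (H.subgroupOf V)

/-! ## Actions on simplicial trees -/

variable {VT : Type*}

/-- `G` splits as a graph of groups: it acts on the simplicial tree `T`
(preserving adjacency), minimally, non-elliptically and without inversions. -/
def ActsOnTree (G : Type*) [Group G] {VT : Type*} (T : SimpleGraph VT) [MulAction G VT] :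
    Prop :=
  T.IsTree ∧
  (∀ (g : G) (a b : VT), T.Adj a b → T.Adj (g • a) (g • b)) ∧
  (∀ (g : G) (a b : VT), T.Adj a b → ¬(g • a = b ∧ g • b = a)) ∧
  (¬ ∃ v : VT, ∀ g : G, g • v = v) ∧
  (∀ W : Set VT, W.Nonempty → (∀ (g : G), ∀ v ∈ W, g • v ∈ W) →
    (∀ a ∈ W, ∀ b ∈ W, ∀ c : VT, T.dist a c + T.dist c b = T.dist a b → c ∈ W) →
    W = Set.univ)

/-- The stabiliser of the edge `{a, b}` (pointwise; for actions without inversions this is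
the full edge stabiliser). -/
def edgeStab (G : Type*) [Group G] {VT : Type*} [MulAction G VT] (a b : VT) : Subgroup G :=
  MulAction.stabilizer G a ⊓ MulAction.stabilizer G b

/-- The halfspace determined by the edge `{a, b}` containing `b`: one of the two connected
components of the complement of the open edge. -/
def halfspace {VT : Type*} (T : SimpleGraph VT) (a b : VT) : Set VT :=
  {v | T.dist v b < T.dist v a}

end MorseGoG

namespace MorseGoG

variable {G : Type*} [Group G] {VT : Type*}

/-- A choice of "edge subgraphs" `Γ(𝔢) ⊆ Γ` of the Cayley graph `Γ = Cay(G, S)`, one for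
each (unoriented) edge of the tree `T`, recorded by its vertex set `A a b ⊆ G`,
satisfying the properties of Lemma 3.2 (`AIS lem`).  Here `p` is the fixed base vertex of
`T` and `f_p(g) = g • p` is the orbit map. -/
structure EdgeSubgraphs (G : Type*) [Group G] (S : Set G) {VT : Type*} (T : SimpleGraph VT)
    [MulAction G VT] (p : VT) where
  /-- the vertex set of `Γ(𝔢)` for the edge `𝔢 = {a, b}` -/
  A : VT → VT → Set G
  /-- `Γ(𝔢)` only depends on the unoriented edge -/
  symm : ∀ a b : VT, A a b = A b a
  /-- (1) `Γ(𝔢)` is connected -/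
  conn : ∀ a b : VT, T.Adj a b → ∀ x ∈ A a b, ∀ y ∈ A a b,
    ∃ (n : ℕ) (c : ℕ → G), IsEdgePath (wdist S) n c ∧ c 0 = x ∧ c n = y ∧
      ∀ i ≤ n, c i ∈ A a b
  /-- (1) `Γ(𝔢)` is `G_𝔢`-invariant -/
  inva : ∀ a b : VT, T.Adj a b → ∀ g ∈ edgeStab G a b, ∀ x ∈ A a b, g * x ∈ A a b
  /-- (1) `Γ(𝔢)` is `G_𝔢`-cocompact -/
  cocpt : ∀ a b : VT, T.Adj a b →
    ∃ F : Finset G, ∀ x ∈ A a b, ∃ g ∈ edgeStab G a b, ∃ f ∈ F, x = g * f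
  /-- (2) equivariance: `Γ(g𝔢) = gΓ(𝔢)` -/
  equivariant : ∀ (g : G) (a b : VT), A (g • a) (g • b) = (fun x => g * x) '' A a b
  /-- (3) `Γ(𝔢)` contains every edge of `Γ` with one endpoint in `f_p⁻¹(𝔥)` and the other
  in `f_p⁻¹(𝔥*)` -/
  crossing : ∀ a b : VT, T.Adj a b → ∀ x y : G, wdist S x y = 1 →
    x • p ∈ halfspace T a b → y • p ∈ halfspace T b a → x ∈ A a b ∧ y ∈ A a b
  /-- (4) `N(f_p⁻¹(𝔥), r) ∩ N(f_p⁻¹(𝔥*), r) ⊆ N(Γ(𝔢), r)` -/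
  nbhd : ∀ a b : VT, T.Adj a b → ∀ r : ℝ, 0 ≤ r → ∀ x : G,
    (∃ y : G, y • p ∈ halfspace T a b ∧ wdist S x y ≤ r) →
    (∃ y : G, y • p ∈ halfspace T b a ∧ wdist S x y ≤ r) →
    ∃ z ∈ A a b, wdist S x z ≤ r
  /-- (5) each edge of `Γ` lies in `Γ(𝔢)` for only finitely many edges `𝔢` of `T` -/
  finmany : ∀ x y : G, wdist S x y = 1 →
    {e : VT × VT | T.Adj e.1 e.2 ∧ x ∈ A e.1 e.2 ∧ y ∈ A e.1 e.2}.Finite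

/-- The vertex set of `Γ(𝔥)` for the halfspace `𝔥` of the edge `{a,b}` containing `b`:
`f_p⁻¹(𝔥) ∖ Γ(𝔢)`. -/
def hsVerts (T : SimpleGraph VT) [MulAction G VT] (p : VT)
    (A : VT → VT → Set G) (a b : VT) : Set G :=
  {g : G | g • p ∈ halfspace T a b ∧ g ∉ A a b}

/-- `M(𝔥) ⊆ ∂_M G`: classes of rays eventually contained in `Γ(𝔥)`, for the halfspace `𝔥`
of the edge `{a,b}` containing `b`. -/
def Mset (S : Set G) (T : SimpleGraph VT) [MulAction G VT] (p : VT)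
    (A : VT → VT → Set G) (a b : VT) : Set (MorseBoundary G S) :=
  {ξ | ∃ γ : GRay G S, Quot.mk (grayRel S) γ = ξ ∧
        ∃ n₀ : ℕ, ∀ n ≥ n₀, γ.seq n ∈ hsVerts T p A a b}

end MorseGoG

namespace MorseGoG

/-! ### Word metrics -/

section WordMetric

variable {G : Type*} [Group G] {S : Set G}

theorem wordLength_le_of_list {l : List G} (hl : ∀ x ∈ l, x ∈ S ∨ x⁻¹ ∈ S) :
    wordLength S l.prod ≤ l.length :=
  Nat.sInf_le ⟨l, rfl, hl, rfl⟩

theorem exists_list_wordLength (hS : Subgroup.closure S = ⊤) (g : G) :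
    ∃ l : List G, l.length = wordLength S g ∧ (∀ x ∈ l, x ∈ S ∨ x⁻¹ ∈ S) ∧ l.prod = g := by
  have hg : g ∈ (Subgroup.closure S).toSubmonoid := by simp [hS]
  rw [Subgroup.closure_toSubmonoid] at hg
  obtain ⟨l, hl, hprod⟩ := Submonoid.exists_list_of_mem_closure hg
  have hne : {n : ℕ | ∃ l : List G, l.length = n ∧ (∀ x ∈ l, x ∈ S ∨ x⁻¹ ∈ S) ∧
      l.prod = g}.Nonempty :=
    ⟨l.length, l, rfl, fun x hx => by simpa using hl x hx, hprod⟩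
  exact Nat.sInf_mem hne

theorem wordLength_one : wordLength S (1 : G) = 0 := by
  have := wordLength_le_of_list (S := S) (l := []) (by simp)
  simpa using this

theorem wordLength_mul_le (hS : Subgroup.closure S = ⊤) (g h : G) :
    wordLength S (g * h) ≤ wordLength S g + wordLength S h := by
  obtain ⟨l, hl, hlS, rfl⟩ := exists_list_wordLength hS g
  obtain ⟨k, hk, hkS, rfl⟩ := exists_list_wordLength hS h
  rw [← hl, ← hk, ← List.prod_append, ← List.length_append]
  apply wordLength_le_of_list
  intro x hx
  rcases List.mem_append.1 hx with hx | hx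
  exacts [hlS x hx, hkS x hx]

theorem wordLength_inv_le (hS : Subgroup.closure S = ⊤) (g : G) :
    wordLength S g⁻¹ ≤ wordLength S g := by
  obtain ⟨l, hl, hlS, rfl⟩ := exists_list_wordLength hS g
  rw [← hl, List.prod_inv_reverse]
  refine (wordLength_le_of_list ?_).trans (by simp)
  intro x hx
  simp only [List.mem_reverse, List.mem_map] at hx
  obtain ⟨y, hy, rfl⟩ := hx
  simpa using (hlS y hy).symm

theorem wdist_nonneg (g h : G) : 0 ≤ wdist S g h := Nat.cast_nonneg _

theorem wdist_self (g : G) : wdist S g g = 0 := by simp [wdist, wordLength_one]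

theorem wdist_one_left (g : G) : wdist S 1 g = wordLength S g := by simp [wdist]

theorem wdist_comm (hS : Subgroup.closure S = ⊤) (g h : G) : wdist S g h = wdist S h g := by
  have key : ∀ x y : G, wordLength S (x⁻¹ * y) ≤ wordLength S (y⁻¹ * x) := fun x y => by
    simpa using wordLength_inv_le hS (y⁻¹ * x)
  exact congrArg Nat.cast (le_antisymm (key g h) (key h g))

theorem wdist_triangle (hS : Subgroup.closure S = ⊤) (x y z : G) :
    wdist S x z ≤ wdist S x y + wdist S y z := by
  have h := wordLength_mul_le hS (x⁻¹ * y) (y⁻¹ * z)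
  have e : x⁻¹ * y * (y⁻¹ * z) = x⁻¹ * z := by group
  rw [e] at h
  unfold wdist
  exact_mod_cast h

theorem finite_wordBall (hfin : S.Finite) (hS : Subgroup.closure S = ⊤) (n : ℕ) :
    {g : G | wordLength S g ≤ n}.Finite := by
  have hword : ∀ m : ℕ, {g : G | ∃ l : List G, l.length = m ∧ (∀ x ∈ l, x ∈ S ∨ x⁻¹ ∈ S) ∧
      l.prod = g}.Finite := by
    intro m
    induction m with
    | zero =>
      refine (Set.finite_singleton (1 : G)).subset ?_
      rintro g ⟨l, hl, -, rfl⟩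
      simp [List.length_eq_zero_iff.1 hl]
    | succ m ih =>
      refine (Set.Finite.image2 (fun x y => x * y) (hfin.union hfin.inv) ih).subset ?_
      rintro g ⟨l, hl, hlS, rfl⟩
      match l, hl, hlS with
      | x :: l, hl, hlS =>
        refine ⟨x, by simpa using hlS x (by simp), l.prod,
          ⟨l, by simpa using hl, fun y hy => hlS y (by simp [hy]), rfl⟩, by simp⟩
  refine ((Set.finite_Iic n).biUnion (fun m _ => hword m)).subset ?_
  intro g hg
  obtain ⟨l, hl, hlS, hprod⟩ := exists_list_wordLength hS g
  exact Set.mem_biUnion (show wordLength S g ∈ Set.Iic n from hg) ⟨l, hl, hlS, hprod⟩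

/-- Every group element is the endpoint of a discrete geodesic segment starting at `1`;
the sequence is constant after it reaches `g`, so that it stays in the `n`-ball at each time `n`. -/
theorem exists_geodSeg (hS : Subgroup.closure S = ⊤) (g : G) :
    ∃ σ : ℕ → G, σ 0 = 1 ∧ σ (wordLength S g) = g ∧
      IsGeodSeg (wdist S) (wordLength S g) σ ∧ ∀ n, wordLength S (σ n) ≤ n := by
  obtain ⟨l, hl, hlS, hprod⟩ := exists_list_wordLength hS g
  have hstep : ∀ i j : ℕ, i ≤ j →
      wdist S (l.take i).prod (l.take j).prod ≤ (j : ℝ) - i := by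
    intro i j hij
    obtain ⟨k, rfl⟩ := Nat.exists_eq_add_of_le hij
    have hle : wordLength S ((l.drop i).take k).prod ≤ k :=
      (wordLength_le_of_list fun x hx =>
        hlS x (List.mem_of_mem_drop (List.mem_of_mem_take hx))).trans (by simp)
    rw [wdist, List.take_add, List.prod_append, inv_mul_cancel_left]
    push_cast
    simpa using hle
  have hend : (l.take (wordLength S g)).prod = g := by rw [← hl, List.take_length, hprod]
  have hge : ∀ i j : ℕ, i ≤ j → j ≤ wordLength S g →
      wdist S (l.take i).prod (l.take j).prod = (j : ℝ) - i := by
    intro i j hij hj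
    refine le_antisymm (hstep i j hij) ?_
    have h0 := hstep 0 i (Nat.zero_le i)
    have h1 := hstep j _ hj
    have h2 := wdist_triangle hS 1 (l.take i).prod g
    have h3 := wdist_triangle hS (l.take i).prod (l.take j).prod g
    rw [hend] at h1
    rw [wdist_one_left] at h2
    simp only [List.take_zero, List.prod_nil, Nat.cast_zero, sub_zero] at h0
    linarith
  refine ⟨fun n => (l.take n).prod, by simp, hend, ?_, ?_⟩
  · intro i hi j hj
    rcases le_total i j with hij | hij
    · have : (i : ℝ) ≤ j := by exact_mod_cast hij
      rw [hge i j hij hj, abs_sub_comm, abs_of_nonneg (by linarith)]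
    · have : (j : ℝ) ≤ i := by exact_mod_cast hij
      rw [wdist_comm hS, hge j i hij hi, abs_of_nonneg (by linarith)]
  · intro n
    exact (wordLength_le_of_list fun x hx => hlS x (List.mem_of_mem_take hx)).trans (by simp)

theorem GRay.wdist_one_seq (γ : GRay G S) (n : ℕ) : wdist S 1 (γ.seq n) = n := by
  have := γ.geod 0 n
  simpa [γ.base] using this

/-- Word metrics of generating sets satisfy the metric axioms used here, so `grayRel` is an equivalence
relation and equality in the Morse boundary is finite Hausdorff distance. -/
theorem grayRel_of_mk_eq (hS : Subgroup.closure S = ⊤) {x y : GRay G S}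
    (h : (Quot.mk (grayRel S) x : MorseBoundary G S) = Quot.mk (grayRel S) y) :
    grayRel S x y := by
  have hnear : ∀ {A B C : Set G} {r s : ℝ}, (∀ a ∈ A, InNbhd (wdist S) B r a) →
      (∀ b ∈ B, InNbhd (wdist S) C s b) → ∀ a ∈ A, InNbhd (wdist S) C (r + s) a := by
    intro A B C r s hAB hBC u hu
    obtain ⟨v, hv, huv⟩ := hAB u hu
    obtain ⟨w, hw, hvw⟩ := hBC v hv
    exact ⟨w, hw, (wdist_triangle hS u v w).trans (add_le_add huv hvw)⟩
  have hequiv : Equivalence (grayRel (G := G) S) := by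
    refine ⟨fun x => ⟨0, ?_, ?_⟩, ?_, ?_⟩
    · exact fun u hu => ⟨u, hu, (wdist_self u).le⟩
    · exact fun u hu => ⟨u, hu, (wdist_self u).le⟩
    · rintro x y ⟨r, h₁, h₂⟩
      exact ⟨r, h₂, h₁⟩
    · rintro x y z ⟨r, h₁, h₂⟩ ⟨s, h₃, h₄⟩
      exact ⟨r + s, hnear h₁ h₃, fun c hc => by simpa [add_comm] using hnear h₄ h₂ c hc⟩
  exact (Equivalence.eqvGen_iff hequiv).1 (Quot.eqvGen_exact h)

end WordMetric

/-! ### Quasi-geodesics near Morse rays -/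

section Morse

variable {G : Type*} [Group G] {S : Set G}

/-- The Morse property also controls quasi-geodesics whose endpoints are only `K`-close to the
Morse set: moving the two endpoints onto the set costs `2K` in the quasi-geodesic constant. -/
theorem MorseSet.inNbhd_of_near (hS : Subgroup.closure S = ⊤) {N : ℝ → ℝ} {A : Set G}
    (hA : MorseSet (wdist S) N A) {K C a b : ℝ} (hK : 0 ≤ K) (hab : a ≤ b) {α : ℝ → G}
    (hα : IsQG (wdist S) C (Set.Icc a b) α) (ha : InNbhd (wdist S) A K (α a))
    (hb : InNbhd (wdist S) A K (α b)) :
    ∀ t ∈ Set.Icc a b, InNbhd (wdist S) A (max (N (C + 2 * K)) K) (α t) := by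
  obtain ⟨x, hxA, hx⟩ := ha
  obtain ⟨y, hyA, hy⟩ := hb
  obtain ⟨hC, hα⟩ := hα
  intro t ht
  rcases eq_or_ne t a with rfl | hta
  · exact ⟨x, hxA, hx.trans (le_max_right _ _)⟩
  rcases eq_or_ne t b with rfl | htb
  · exact ⟨y, hyA, hy.trans (le_max_right _ _)⟩
  have hlt : a < b := lt_of_lt_of_le (lt_of_le_of_ne ht.1 hta.symm) ht.2
  set β : ℝ → G := fun s => if s = a then x else if s = b then y else α s with hβ
  have hclose : ∀ s, wdist S (α s) (β s) ≤ K := by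
    intro s
    by_cases h1 : s = a
    · simpa [hβ, h1] using hx
    by_cases h2 : s = b
    · simpa [hβ, h2, hlt.ne'] using hy
    · simpa [hβ, h1, h2, wdist_self] using hK
  have hQ : IsQG (wdist S) (C + 2 * K) (Set.Icc a b) β := by
    refine ⟨by linarith, fun s hs u hu => ?_⟩
    obtain ⟨h1, h2⟩ := hα s hs u hu
    have e1 := hclose s
    have e2 := hclose u
    have e1' := e1
    have e2' := e2
    rw [wdist_comm hS] at e1' e2'
    have t1 := wdist_triangle hS (α s) (β s) (α u)
    have t2 := wdist_triangle hS (β s) (β u) (α u)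
    have t3 := wdist_triangle hS (β s) (α s) (β u)
    have t4 := wdist_triangle hS (α s) (α u) (β u)
    have hdiv : |s - u| / (C + 2 * K) ≤ |s - u| / C :=
      div_le_div_of_nonneg_left (abs_nonneg _) (by linarith) (by linarith)
    have hmul : 0 ≤ 2 * K * |s - u| := by positivity
    constructor <;> linarith
  obtain ⟨z, hz, hzd⟩ := hA (C + 2 * K) (by linarith) a b hab β hQ (by simpa [hβ] using hxA)
    (by simpa [hβ, hlt.ne'] using hyA) t ht
  refine ⟨z, hz, ?_⟩
  have : β t = α t := by simp [hβ, hta, htb]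
  rw [← this]
  exact hzd.trans (le_max_left _ _)

/-- A discrete quasi-geodesic segment becomes a quasi-geodesic after composing with the floor. -/
theorem isQG_floor {C : ℝ} (hC : 1 ≤ C) {L : ℕ} {σ : ℕ → G}
    (hσ : ∀ i ≤ L, ∀ j ≤ L, |(i : ℝ) - j| / C - C ≤ wdist S (σ i) (σ j) ∧
      wdist S (σ i) (σ j) ≤ C * |(i : ℝ) - j| + C) :
    IsQG (wdist S) (2 * C) (Set.Icc 0 (L : ℝ)) (fun t => σ ⌊t⌋₊) := by
  refine ⟨by linarith, fun s hs t ht => ?_⟩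
  obtain ⟨h1, h2⟩ := hσ ⌊s⌋₊ (Nat.floor_le_of_le hs.2) ⌊t⌋₊ (Nat.floor_le_of_le ht.2)
  have s1 := Nat.floor_le hs.1
  have s2 := Nat.lt_floor_add_one s
  have t1 := Nat.floor_le ht.1
  have t2 := Nat.lt_floor_add_one t
  have k1 : |((⌊s⌋₊ : ℕ) : ℝ) - ((⌊t⌋₊ : ℕ) : ℝ)| ≤ |s - t| + 1 := by
    rw [abs_le]
    constructor <;> linarith [neg_abs_le (s - t), le_abs_self (s - t)]
  have k2 : |s - t| - 1 ≤ |((⌊s⌋₊ : ℕ) : ℝ) - ((⌊t⌋₊ : ℕ) : ℝ)| := by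
    rw [sub_le_iff_le_add, abs_le]
    constructor <;> linarith [neg_abs_le ((⌊s⌋₊ : ℝ) - (⌊t⌋₊ : ℝ)),
      le_abs_self ((⌊s⌋₊ : ℝ) - (⌊t⌋₊ : ℝ))]
  have hC0 : 0 < C := by linarith
  have d1 : (|s - t| - 1) / C ≤ |((⌊s⌋₊ : ℕ) : ℝ) - ((⌊t⌋₊ : ℕ) : ℝ)| / C := by gcongr
  have d2 : (1 : ℝ) / C ≤ 1 := by rw [div_le_one hC0]; exact hC
  have d3 : |s - t| / (2 * C) ≤ |s - t| / C :=
    div_le_div_of_nonneg_left (abs_nonneg _) hC0 (by linarith)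
  have d4 := mul_le_mul_of_nonneg_left k1 hC0.le
  have d5 : 0 ≤ C * |s - t| := by positivity
  rw [sub_div] at d1
  constructor
  · linarith
  · show wdist S (σ ⌊s⌋₊) (σ ⌊t⌋₊) ≤ _
    linarith

/-- A quasi-geodesic segment from `1` to a point near `γ m` fellow-travels the Morse ray `γ` up to
time `m`, in both directions. The reverse direction is a discrete intermediate value argument. -/
theorem fellow_travel (hS : Subgroup.closure S = ⊤) {N : ℝ → ℝ} (γ : GRay G S)
    (hN : MorseSet (wdist S) N (Set.range γ.seq)) {C R : ℝ} (hC : 1 ≤ C) (hR : 0 ≤ R)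
    {L m : ℕ} {σ : ℕ → G} (h0 : σ 0 = 1)
    (hσ : ∀ i ≤ L, ∀ j ≤ L, |(i : ℝ) - j| / C - C ≤ wdist S (σ i) (σ j) ∧
      wdist S (σ i) (σ j) ≤ C * |(i : ℝ) - j| + C)
    (hm : wdist S (γ.seq m) (σ L) ≤ R) :
    (∀ l ≤ L, InNbhd (wdist S) (Set.range γ.seq) (max (N (2 * C + 2 * R)) R) (σ l)) ∧
    ∀ u ≤ m, ∃ l ≤ L,
      wdist S (γ.seq u) (σ l) ≤ 3 * max (N (2 * C + 2 * R)) R + 2 * C := by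
  set K := max (N (2 * C + 2 * R)) R with hKdef
  have hRK : R ≤ K := le_max_right _ _
  have hnear : ∀ l ≤ L, InNbhd (wdist S) (Set.range γ.seq) K (σ l) := by
    intro l hl
    have := hN.inNbhd_of_near hS hR (Nat.cast_nonneg L) (isQG_floor hC hσ)
      ⟨1, ⟨0, γ.base⟩, by simpa [h0, wdist_self] using hR⟩
      ⟨γ.seq m, ⟨m, rfl⟩, by simpa [wdist_comm hS (σ L)] using hm⟩
      (l : ℝ) ⟨Nat.cast_nonneg l, by exact_mod_cast hl⟩
    simpa using this
  refine ⟨hnear, fun u hu => ?_⟩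
  classical
  have hex : ∃ l, l ≤ L ∧ ∃ v ≥ u, wdist S (σ l) (γ.seq v) ≤ K :=
    ⟨L, le_rfl, m, hu, by rw [wdist_comm hS]; exact hm.trans hRK⟩
  obtain ⟨hlL, v, hv, hvd⟩ := Nat.find_spec hex
  have hmin := fun k => Nat.find_min (m := k) hex
  generalize Nat.find hex = l at hlL hvd hmin
  refine ⟨l, hlL, ?_⟩
  have hvR : (u : ℝ) ≤ v := by exact_mod_cast hv
  rcases l with _ | l
  · rw [h0, γ.wdist_one_seq] at hvd
    rw [h0, wdist_comm hS, γ.wdist_one_seq]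
    linarith
  · obtain ⟨_, ⟨w, rfl⟩, hw⟩ := hnear l (by omega)
    have hwu : w < u := by
      by_contra hcon
      exact hmin l (by omega) ⟨by omega, w, by omega, hw⟩
    have hwR : (w : ℝ) < u := by exact_mod_cast hwu
    have hstep := (hσ l (by omega) (l + 1) hlL).2
    have habs : |(l : ℝ) - ((l + 1 : ℕ) : ℝ)| = 1 := by push_cast; simp
    rw [habs] at hstep
    have hvw : wdist S (γ.seq w) (γ.seq v) = v - w := by
      rw [γ.geod, abs_sub_comm, abs_of_nonneg (by linarith)]
    have huv : wdist S (γ.seq u) (γ.seq v) = v - u := by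
      rw [γ.geod, abs_sub_comm, abs_of_nonneg (by linarith)]
    have t1 := wdist_triangle hS (γ.seq w) (σ l) (γ.seq v)
    have t2 := wdist_triangle hS (σ l) (σ (l + 1)) (γ.seq v)
    have t3 := wdist_triangle hS (γ.seq u) (γ.seq v) (σ (l + 1))
    rw [wdist_comm hS (γ.seq w) (σ l)] at t1
    rw [wdist_comm hS (γ.seq v) (σ (l + 1))] at t3
    linarith

/-- If a sequence in an undistorted subgroup is Morse in the ambient group, then it is Morse in
the subgroup. -/
theorem isMorse_of_undistorted {E : Subgroup G} {F : Set E} {C : ℝ} (hC : 1 ≤ C)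
    (hF : ∀ h h' : E, wdist F h h' ≤ C * wdist S (h : G) (h' : G) + C ∧
      wdist S (h : G) (h' : G) ≤ C * wdist F h h' + C)
    {σ : ℕ → E} (hσ : IsMorse (wdist S) (Set.range fun n => (σ n : G))) :
    IsMorse (wdist F) (Set.range σ) := by
  obtain ⟨N, hN⟩ := hσ
  refine ⟨fun D => C * N (C * D + C) + C, ?_⟩
  rintro D hD a b hab α ⟨-, hα⟩ ⟨j, hj⟩ ⟨k, hk⟩ t ht
  have hC0 : 0 < C := by linarith
  have hD0 : 0 < D := by linarith
  have hCD : D ≤ C * D := le_mul_of_one_le_left hD0.le hC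
  have hQ : IsQG (wdist S) (C * D + C) (Set.Icc a b) (fun s => (α s : G)) := by
    refine ⟨by linarith, fun s hs u hu => ?_⟩
    obtain ⟨h1, h2⟩ := hα s hs u hu
    obtain ⟨h3, h4⟩ := hF (α s) (α u)
    constructor
    · have e1 : |s - u| / D ≤ C * (wdist S (α s : G) (α u : G) + D + 1) := by nlinarith
      have e2 : |s - u| / (C * D) ≤ wdist S (α s : G) (α u : G) + D + 1 := by
        rw [mul_comm C D, ← div_div, div_le_iff₀ hC0]
        linarith
      have e3 : |s - u| / (C * D + C) ≤ |s - u| / (C * D) :=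
        div_le_div_of_nonneg_left (abs_nonneg _) (by positivity) (by linarith)
      linarith
    · have e1 := mul_le_mul_of_nonneg_left h2 hC0.le
      have e2 : 0 ≤ C * |s - u| := by positivity
      show wdist S (α s : G) (α u : G) ≤ _
      linarith
  obtain ⟨_, ⟨l, rfl⟩, hl⟩ := hN (C * D + C) (by linarith) a b hab _ hQ
    ⟨j, congrArg Subtype.val hj⟩ ⟨k, congrArg Subtype.val hk⟩ t ht
  exact ⟨σ l, ⟨l, rfl⟩, (hF (α t) (σ l)).1.trans (by
    have := mul_le_mul_of_nonneg_left hl hC0.le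
    simpa using this)⟩

/-- The heart of the argument. For an undistorted subgroup `E` with empty relative Morse boundary,
`N`-Morse rays from `1` leave the `R`-neighbourhood of `E` after a time depending only on
`N` and `R`. Otherwise `E`-geodesics from `1` to the far-away points of `E` met by such rays
subconverge to a geodesic ray of `E` which is Morse in `G`. -/
theorem exists_uniform_bound {S : Finset G} (hS : Subgroup.closure (S : Set G) = ⊤)
    (E : Subgroup G) (hU : FGUndistorted (S : Set G) E) (hE : RelMorseEmpty (S : Set G) E)
    (N : ℝ → ℝ) (R : ℝ) :
    ∃ M : ℕ, ∀ γ : GRay G (S : Set G), MorseSet (wdist (S : Set G)) N (Set.range γ.seq) →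
      ∀ m : ℕ, (∃ h ∈ E, wdist (S : Set G) (γ.seq m) h ≤ R) → m ≤ M := by
  by_contra! hcon
  choose γ hN m hm' hm using hcon
  choose h hhE hR using hm'
  have hR0 : 0 ≤ R := (wdist_nonneg _ _).trans (hR 0)
  obtain ⟨F, hFgen, C, hC, hF⟩ := hU
  have hC0 : 0 < C := by linarith
  choose τ hτ0 hτL hτgeod hτball using fun i => exists_geodSeg hFgen (⟨h i, hhE i⟩ : E)
  set L : ℕ → ℕ := fun i => wordLength (F : Set E) ⟨h i, hhE i⟩ with hL
  have hmL : ∀ i, (m i : ℝ) ≤ R + (C * L i + C) := by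
    intro i
    have t := wdist_triangle hS 1 (h i) ((γ i).seq (m i))
    have t' := (hF 1 ⟨h i, hhE i⟩).2
    have t'' := hR i
    rw [wdist_one_left] at t'
    rw [(γ i).wdist_one_seq] at t
    rw [wdist_comm hS] at t''
    simp only [OneMemClass.coe_one] at t'
    linarith
  -- A non-principal ultrafilter selects the limit of the segments at every time simultaneously.
  set U : Ultrafilter ℕ := hyperfilter ℕ with hUdef
  have hUatTop : (U : Filter ℕ) ≤ atTop := Nat.hyperfilter_le_atTop
  have hmlarge : ∀ x : ℝ, ∀ᶠ i in (U : Filter ℕ), x ≤ m i := by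
    intro x
    filter_upwards [hUatTop (eventually_ge_atTop ⌈x⌉₊)] with i hi
    have h1 : (⌈x⌉₊ : ℝ) ≤ i := by exact_mod_cast hi
    have h2 : (i : ℝ) ≤ m i := by exact_mod_cast (hm i).le
    exact (Nat.le_ceil x).trans (h1.trans h2)
  have hLlarge : ∀ n : ℕ, ∀ᶠ i in (U : Filter ℕ), n ≤ L i := by
    intro n
    filter_upwards [hmlarge (R + (C * n + C))] with i hi
    have h1 : C * n ≤ C * L i := by linarith [hmL i]
    exact_mod_cast le_of_mul_le_mul_left h1 hC0
  have hlim : ∀ n : ℕ, ∃ x : E, ∀ᶠ i in (U : Filter ℕ), τ i n = x := by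
    intro n
    have := (Ultrafilter.eventually_exists_mem_iff (f := U) (P := fun x i => τ i n = x)
      (finite_wordBall F.finite_toSet hFgen n)).1
      (Eventually.of_forall fun i => ⟨τ i n, hτball i n, rfl⟩)
    obtain ⟨x, -, hx⟩ := this
    exact ⟨x, hx⟩
  choose σ hσ using hlim
  have hgeod : IsGeodSeq (wdist (F : Set E)) σ := by
    intro i j
    obtain ⟨k, h1, h2, h3, h4⟩ :=
      ((hσ i).and ((hσ j).and ((hLlarge i).and (hLlarge j)))).exists
    rw [← h1, ← h2]
    exact hτgeod k i h3 j h4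
  -- The segments are uniform quasi-geodesics of `G`, so each fellow-travels its Morse ray.
  have hqg : ∀ k, ∀ i ≤ L k, ∀ j ≤ L k,
      |(i : ℝ) - j| / C - C ≤ wdist (S : Set G) (τ k i : G) (τ k j : G) ∧
      wdist (S : Set G) (τ k i : G) (τ k j : G) ≤ C * |(i : ℝ) - j| + C := by
    intro k i hi j hj
    obtain ⟨h1, h2⟩ := hF (τ k i) (τ k j)
    rw [hτgeod k i hi j hj] at h1 h2
    refine ⟨?_, h2⟩
    have : |(i : ℝ) - j| / C ≤ wdist (S : Set G) (τ k i : G) (τ k j : G) + 1 := by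
      rw [div_le_iff₀ hC0]
      linarith
    linarith
  have hft := fun k => fellow_travel hS (γ k) (hN k) hC hR0 (L := L k) (m := m k)
    (σ := fun n => (τ k n : G)) (by simp [hτ0 k]) (hqg k) (by simpa [hL, hτL k] using hR k)
  set K := max (N (2 * C + 2 * R)) R with hK
  have hK0 : 0 ≤ K := hR0.trans (le_max_right _ _)
  have hmorse : IsMorse (wdist (S : Set G)) (Set.range fun n => (σ n : G)) := by
    refine ⟨fun D => max (N (D + 2 * K)) K + (3 * K + 2 * C), ?_⟩
    rintro D hD a b hab α hα ⟨j, hj⟩ ⟨k, hk⟩ t ht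
    set K₂ := max (N (D + 2 * K)) K with hK₂
    set K₃ := 3 * K + 2 * C with hK₃
    -- `Q` bounds the `E`-length of any point of a segment lying within `K₂ + K₃` of `α t`.
    set Q : ℝ := C * (wdist (S : Set G) 1 (α t) + K₂ + K₃) + C with hQ
    have hagree : ∀ᶠ i in (U : Filter ℕ), ∀ n ∈ Set.Iic ⌈Q⌉₊, τ i n = σ n :=
      (Filter.eventually_all_finite (Set.finite_Iic ⌈Q⌉₊)).2 fun n _ => hσ n
    obtain ⟨i, hi, hij, hik, hjL, hkL, hmi⟩ :=
      (hagree.and ((hσ j).and ((hσ k).and ((hLlarge j).and ((hLlarge k).and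
        (hmlarge (wdist (S : Set G) 1 (α t) + K₂))))))).exists
    have ha : InNbhd (wdist (S : Set G)) (Set.range (γ i).seq) K (α a) := by
      rw [← hj]
      simpa [hij] using (hft i).1 j hjL
    have hb : InNbhd (wdist (S : Set G)) (Set.range (γ i).seq) K (α b) := by
      rw [← hk]
      simpa [hik] using (hft i).1 k hkL
    obtain ⟨_, ⟨u, rfl⟩, hu⟩ := (hN i).inNbhd_of_near hS hK0 hab hα ha hb t ht
    have hum : u ≤ m i := by
      have := wdist_triangle hS 1 (α t) ((γ i).seq u)
      rw [(γ i).wdist_one_seq] at this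
      have : (u : ℝ) ≤ m i := by linarith
      exact_mod_cast this
    obtain ⟨l, hlL, hl⟩ := (hft i).2 u hum
    have htl : wdist (S : Set G) (α t) (τ i l : G) ≤ K₂ + K₃ :=
      (wdist_triangle hS _ _ _).trans (add_le_add hu hl)
    have hlQ : (l : ℝ) ≤ Q := by
      have h1 := (hF (τ i 0) (τ i l)).1
      rw [hτgeod i 0 (Nat.zero_le _) l hlL] at h1
      rw [hτ0] at h1
      simp only [OneMemClass.coe_one, Nat.cast_zero, zero_sub, abs_neg, Nat.abs_cast] at h1
      have h2 := wdist_triangle hS 1 (α t) (τ i l : G)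
      have h3 : C * wdist (S : Set G) 1 (τ i l : G) ≤
          C * (wdist (S : Set G) 1 (α t) + K₂ + K₃) :=
        mul_le_mul_of_nonneg_left (by linarith) hC0.le
      linarith
    have hlQ' : l ≤ ⌈Q⌉₊ := by exact_mod_cast hlQ.trans (Nat.le_ceil Q)
    refine ⟨σ l, ⟨l, rfl⟩, ?_⟩
    rw [← hi l hlQ']
    exact htl
  exact hE F hFgen σ hgeod (isMorse_of_undistorted hC hF hmorse) hmorse

end Morse

/-! ### Sides of an edge -/

section Sides

variable {G VT : Type*} [Group G] [MulAction G VT]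

theorem mem_halfspace_or {T : SimpleGraph VT} (hT : T.IsTree) {a b : VT} (hab : T.Adj a b)
    (v : VT) : v ∈ halfspace T a b ∨ v ∈ halfspace T b a :=
  (lt_or_gt_of_ne (hT.dist_ne_of_adj v hab)).symm

/-- Cocompactness puts `Γ(𝔢)` within bounded distance of the edge stabiliser, so an `N`-Morse ray
leaves any neighbourhood of `Γ(𝔢)` after a time depending only on `N` and its radius. -/
theorem exists_bound_edge {S : Finset G} (hS : Subgroup.closure (S : Set G) = ⊤)
    {T : SimpleGraph VT} {p : VT}
    (hedge : ∀ a b : VT, T.Adj a b →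
      FGUndistorted (S : Set G) (edgeStab G a b) ∧
      RelMorseEmpty (S : Set G) (edgeStab G a b))
    (A : EdgeSubgraphs G (S : Set G) T p) {a b : VT} (hab : T.Adj a b) (N : ℝ → ℝ) (r : ℝ) :
    ∃ M : ℕ, ∀ γ : GRay G (S : Set G), MorseSet (wdist (S : Set G)) N (Set.range γ.seq) →
      ∀ m : ℕ, InNbhd (wdist (S : Set G)) (A.A a b) r (γ.seq m) → m ≤ M := by
  obtain ⟨F, hF⟩ := A.cocpt a b hab
  obtain ⟨R, hR⟩ : ∃ R : ℝ, ∀ f ∈ F, wdist (S : Set G) f 1 ≤ R :=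
    ⟨∑ f ∈ F, wdist (S : Set G) f 1, fun f hf =>
      Finset.single_le_sum (f := fun f => wdist (S : Set G) f 1)
        (fun x _ => wdist_nonneg x 1) hf⟩
  obtain ⟨M, hM⟩ := exists_uniform_bound hS (edgeStab G a b) (hedge a b hab).1
    (hedge a b hab).2 N (r + R)
  refine ⟨M, fun γ hγ m hm => hM γ hγ m ?_⟩
  obtain ⟨z, hz, hzr⟩ := hm
  obtain ⟨g, hg, f, hf, rfl⟩ := hF z hz
  refine ⟨g, hg, (wdist_triangle hS _ (g * f) g).trans (add_le_add hzr ?_)⟩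
  have : wdist (S : Set G) (g * f) g = wdist (S : Set G) f 1 := by simp [wdist]
  rw [this]
  exact hR f hf

/-- A ray avoiding `Γ(𝔢)` from time `n₀` on never changes sides afterwards. -/
theorem eventually_side {S : Set G} {T : SimpleGraph VT} (hT : T.IsTree) {p : VT}
    (A : EdgeSubgraphs G S T p) {a b : VT} (hab : T.Adj a b) (γ : GRay G S) {n₀ : ℕ}
    (hav : ∀ n ≥ n₀, γ.seq n ∉ A.A a b) (h₀ : γ.seq n₀ • p ∈ halfspace T a b) :
    ∀ n ≥ n₀, γ.seq n ∈ hsVerts T p A.A a b := by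
  intro n hn
  refine ⟨?_, hav n hn⟩
  induction n, hn using Nat.le_induction with
  | base => exact h₀
  | succ n hn ih =>
    refine (mem_halfspace_or hT hab _).resolve_right fun hcross => hav n hn ?_
    refine (A.crossing a b hab _ _ ?_ ih hcross).1
    rw [γ.geod]
    push_cast
    simp

/-- Two rays at finite Hausdorff distance cannot end on different sides of an edge: their tails
would lie near both sides, hence near `Γ(𝔢)`. -/
theorem false_of_two_sides {S : Finset G} (hS : Subgroup.closure (S : Set G) = ⊤)
    {T : SimpleGraph VT} {p : VT}
    (hedge : ∀ a b : VT, T.Adj a b →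
      FGUndistorted (S : Set G) (edgeStab G a b) ∧
      RelMorseEmpty (S : Set G) (edgeStab G a b))
    (A : EdgeSubgraphs G (S : Set G) T p) {a b : VT} (hab : T.Adj a b)
    {γ γ' : GRay G (S : Set G)}
    (hrel : (Quot.mk (grayRel (S : Set G)) γ : MorseBoundary G (S : Set G)) = Quot.mk _ γ')
    {n₀ n₁ : ℕ} (h : ∀ n ≥ n₀, γ.seq n ∈ hsVerts T p A.A a b)
    (h' : ∀ n ≥ n₁, γ'.seq n ∈ hsVerts T p A.A b a) : False := by
  obtain ⟨r, hr, -⟩ := grayRel_of_mk_eq hS hrel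
  obtain ⟨N, hN⟩ := γ.morse
  obtain ⟨M, hM⟩ := exists_bound_edge hS hedge A hab N r
  set n := M + 1 + n₀ + n₁ + ⌈r⌉₊ with hn
  obtain ⟨_, ⟨k, rfl⟩, hk⟩ := hr (γ.seq n) ⟨n, rfl⟩
  have hr0 : 0 ≤ r := (wdist_nonneg _ _).trans hk
  have hkn : n₁ ≤ k := by
    have t := wdist_triangle hS 1 (γ'.seq k) (γ.seq n)
    rw [γ'.wdist_one_seq, γ.wdist_one_seq, wdist_comm hS (γ'.seq k)] at t
    have t' := Nat.le_ceil r
    have : ((n₁ + ⌈r⌉₊ : ℕ) : ℝ) ≤ n := by exact_mod_cast (by omega)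
    push_cast at this
    have : (n₁ : ℝ) ≤ k := by linarith
    exact_mod_cast this
  have hnear := A.nbhd a b hab r hr0 (γ.seq n)
    ⟨γ.seq n, (h n (by omega)).1, by rw [wdist_self]; exact hr0⟩
    ⟨γ'.seq k, (h' k hkn).1, hk⟩
  have := hM γ hN n hnear
  omega

/-- On the stratum of `N`-Morse rays, membership in `M(𝔥)` is decided by the vertex at a single
time, so `M(𝔥)` meets each stratum in a closed set. -/
theorem isClosed_Mset {S : Finset G} (hS : Subgroup.closure (S : Set G) = ⊤)
    {T : SimpleGraph VT} (hT : T.IsTree) {p : VT}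
    (hedge : ∀ a b : VT, T.Adj a b →
      FGUndistorted (S : Set G) (edgeStab G a b) ∧
      RelMorseEmpty (S : Set G) (edgeStab G a b))
    (A : EdgeSubgraphs G (S : Set G) T p) {a b : VT} (hab : T.Adj a b) :
    IsClosed (Mset (S : Set G) T p A.A a b) := by
  refine isClosed_iSup_iff.2 fun N => isClosed_coinduced.2 ?_
  obtain ⟨M, hM⟩ := exists_bound_edge hS hedge A hab N 0
  have hav : ∀ γ : NGRays G (S : Set G) N, ∀ n ≥ M + 1, γ.1.seq n ∉ A.A a b := by
    intro γ n hn hmem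
    have := hM γ.1 γ.2 n ⟨_, hmem, (wdist_self _).le⟩
    omega
  have hpre : (fun γ : NGRays G (S : Set G) N => Quot.mk (grayRel (S : Set G)) γ.1) ⁻¹'
      Mset (S : Set G) T p A.A a b =
      {γ | γ.1.seq (M + 1) ∈ {g : G | g • p ∈ halfspace T a b}} := by
    ext γ
    constructor
    · rintro ⟨γ', hγ', n₀, hn₀⟩
      refine (mem_halfspace_or hT hab _).resolve_right fun hside => ?_
      have hside' := eventually_side hT A hab.symm γ.1
        (fun n hn => by rw [A.symm]; exact hav γ n hn) hside
      exact false_of_two_sides hS hedge A hab hγ' hn₀ hside'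
    · intro hside
      exact ⟨γ.1, rfl, M + 1, eventually_side hT A hab γ.1 (hav γ) hside⟩
  let _ : TopologicalSpace G := ⊥
  have : DiscreteTopology G := ⟨rfl⟩
  have hcont : Continuous fun γ : NGRays G (S : Set G) N => γ.1.seq (M + 1) :=
    (continuous_apply (M + 1)).comp continuous_induced_dom
  exact (congrArg IsClosed hpre).mpr ((isClosed_discrete _).preimage hcont)

end Sides

end MorseGoG

namespace MorseGoG

/-- **Lemma 4.5** (Statement 14, `clopen partition`).  Under Assumption 4.1, for every
halfspace `𝔥` of `T` we have a partition `∂_M G = M(𝔥) ⊔ M(𝔥*)` into closed subsets. -/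
theorem clopen_partition
    {G VT : Type*} [Group G] [MulAction G VT]
    (S : Finset G) (hSgen : Subgroup.closure (S : Set G) = ⊤)
    (T : SimpleGraph VT) (hact : ActsOnTree G T) (p : VT)
    (hedge : ∀ a b : VT, T.Adj a b →
      FGUndistorted (S : Set G) (edgeStab G a b) ∧
      RelMorseEmpty (S : Set G) (edgeStab G a b))
    (A : EdgeSubgraphs G (S : Set G) T p)
    (a b : VT) (hab : T.Adj a b) :
    Mset (S : Set G) T p A.A a b ∪ Mset (S : Set G) T p A.A b a = Set.univ ∧
    Disjoint (Mset (S : Set G) T p A.A a b) (Mset (S : Set G) T p A.A b a) ∧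
    IsClosed (Mset (S : Set G) T p A.A a b) ∧
    IsClosed (Mset (S : Set G) T p A.A b a) := by
  have hT : T.IsTree := hact.1
  refine ⟨Set.eq_univ_of_forall fun ξ => ?_, Set.disjoint_left.2 ?_,
    isClosed_Mset hSgen hT hedge A hab, isClosed_Mset hSgen hT hedge A hab.symm⟩
  · obtain ⟨γ, rfl⟩ := Quot.exists_rep ξ
    obtain ⟨N, hN⟩ := γ.morse
    obtain ⟨M, hM⟩ := exists_bound_edge hSgen hedge A hab N 0
    have hav : ∀ n ≥ M + 1, γ.seq n ∉ A.A a b := by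
      intro n hn hmem
      have := hM γ hN n ⟨_, hmem, (wdist_self _).le⟩
      omega
    rcases mem_halfspace_or hT hab (γ.seq (M + 1) • p) with hside | hside
    · exact Or.inl ⟨γ, rfl, M + 1, eventually_side hT A hab γ hav hside⟩
    · exact Or.inr ⟨γ, rfl, M + 1, eventually_side hT A hab.symm γ
        (fun n hn => by rw [A.symm]; exact hav n hn) hside⟩
  · rintro ξ ⟨γ, rfl, n₀, h⟩ ⟨γ', hrel, n₁, h'⟩
    exact false_of_two_sides hSgen hedge A hab hrel.symm h h'

end MorseGoG
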